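/- Semantic typing lemma for application (coeffects): if γ₁·Γ ⊨ M : A^q → B and γ₂·Γ ⊨ V : A and γ ≤co γ₁ + q·γ₂, then γ·Γ ⊨ M V : B. -/

import Mathlib

set_option autoImplicit false

/-- A preordered semiring of grades `(Q, +, 0, ·, 1, ≤co)`,
where `≤co` is a preorder respected by `+` and `·`. -/
structure CoSig (Q : Type) where
  add : Q → Q → Q
  zero : Q
  mul : Q → Q → Q
  one : Q
  le : Q → Q → Prop
  add_assoc : ∀ a b c, add (add a b) c = add a (add b c)
  add_comm : ∀ a b, add a b = add b a
  add_zero : ∀ a, add a zero = a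
  mul_assoc : ∀ a b c, mul (mul a b) c = mul a (mul b c)
  one_mul : ∀ a, mul one a = a
  mul_one : ∀ a, mul a one = a
  zero_mul : ∀ a, mul zero a = zero
  mul_zero : ∀ a, mul a zero = zero
  left_distrib : ∀ a b c, mul a (add b c) = add (mul a b) (mul a c)
  right_distrib : ∀ a b c, mul (add a b) c = add (mul a c) (mul b c)
  le_refl : ∀ a, le a a
  le_trans : ∀ a b c, le a b → le b c → le a c
  add_le_add : ∀ a b c d, le a b → le c d → le (add a c) (add b d)
  mul_le_mul : ∀ a b c d, le a b → le c d → le (mul a c) (mul b d)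

namespace CBPVCo

/-- Pointwise comparison of grade vectors: `γ₁ ≤co γ₂`. -/
def vle {Q : Type} (S : CoSig Q) (γ₁ γ₂ : List Q) : Prop := List.Forall₂ S.le γ₁ γ₂

/-- Pointwise addition of grade vectors. -/
def vadd {Q : Type} (S : CoSig Q) (γ₁ γ₂ : List Q) : List Q := List.zipWith S.add γ₁ γ₂

/-- Pointwise scaling of a grade vector: `q·γ`. -/
def vscale {Q : Type} (S : CoSig Q) (q : Q) (γ : List Q) : List Q := γ.map (S.mul q)

/-- `γ ≤co 0̄`: every entry of the grade vector is discardable. -/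
def leZero {Q : Type} (S : CoSig Q) (γ : List Q) : Prop := ∀ q ∈ γ, S.le q S.zero

mutual
/-- CBPV value types (coeffect version): `unit`, thunks `U B`, positive products. -/
inductive VTy (Q : Type) : Type where
  | unit : VTy Q
  | thunk : CTy Q → VTy Q
  | prod : VTy Q → VTy Q → VTy Q
/-- CBPV computation types (coeffect version): graded functions `A^q → B`,
graded returners `F_q A`, negative products. -/
inductive CTy (Q : Type) : Type where
  | arr : VTy Q → Q → CTy Q → CTy Q
  | F : Q → VTy Q → CTy Q
  | wth : CTy Q → CTy Q → CTy Q
end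

mutual
/-- CBPV values (de Bruijn indices for variables). -/
inductive Val (Q : Type) : Type where
  | var : Nat → Val Q
  | unit : Val Q
  | thunk : Comp Q → Val Q
  | pair : Val Q → Val Q → Val Q
/-- CBPV computations, with grade annotations on binders and on `return`. -/
inductive Comp (Q : Type) : Type where
  | lam : Q → Comp Q → Comp Q
  | app : Comp Q → Val Q → Comp Q
  | force : Val Q → Comp Q
  | split : Q → Val Q → Comp Q → Comp Q
  | cpair : Comp Q → Comp Q → Comp Q
  | fst : Comp Q → Comp Q
  | snd : Comp Q → Comp Q
  | ret : Q → Val Q → Comp Q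
  | letin : Q → Comp Q → Comp Q → Comp Q
end

/-- Closed values: closures (capturing a grade vector and an environment),
unit, and pairs of closed values. -/
inductive CloVal (Q : Type) : Type where
  | clo : List Q → List (CloVal Q) → Comp Q → CloVal Q
  | unit : CloVal Q
  | pair : CloVal Q → CloVal Q → CloVal Q

/-- Closed terminal computations. -/
inductive Terminal (Q : Type) : Type where
  | ret : Q → CloVal Q → Terminal Q
  | lamClo : List Q → List (CloVal Q) → Q → Comp Q → Terminal Q
  | cpairClo : List Q → List (CloVal Q) → Comp Q → Comp Q → Terminal Q

/-- The coeffect-instrumented value judgment `γ·ρ ⊢ V ⇓ W`. -/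
inductive EvalVal {Q : Type} (S : CoSig Q) :
    List Q → List (CloVal Q) → Val Q → CloVal Q → Prop where
  | var : ∀ {γ : List Q} {ρ : List (CloVal Q)} {x : Nat} {q : Q} {W : CloVal Q},
      γ.length = ρ.length → ρ[x]? = some W → γ[x]? = some q → S.le q S.one →
      (∀ (i : Nat) (q' : Q), i ≠ x → γ[i]? = some q' → S.le q' S.zero) →
      EvalVal S γ ρ (.var x) W
  | unit : ∀ {γ : List Q} {ρ : List (CloVal Q)},
      γ.length = ρ.length → leZero S γ → EvalVal S γ ρ .unit .unit
  | thunk : ∀ {γ γ' : List Q} {ρ : List (CloVal Q)} {M : Comp Q},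
      vle S γ γ' → EvalVal S γ ρ (.thunk M) (.clo γ' ρ M)
  | pair : ∀ {γ γ₁ γ₂ : List Q} {ρ : List (CloVal Q)} {V₁ V₂ : Val Q} {W₁ W₂ : CloVal Q},
      EvalVal S γ₁ ρ V₁ W₁ → EvalVal S γ₂ ρ V₂ W₂ → vle S γ (vadd S γ₁ γ₂) →
      EvalVal S γ ρ (.pair V₁ V₂) (.pair W₁ W₂)

/-- The coeffect-instrumented big-step judgment `γ·ρ ⊢ M ⇓ T`. -/
inductive EvalComp {Q : Type} (S : CoSig Q) :
    List Q → List (CloVal Q) → Comp Q → Terminal Q → Prop where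
  | lam : ∀ {γ γ' : List Q} {ρ : List (CloVal Q)} {q : Q} {M : Comp Q},
      vle S γ γ' → EvalComp S γ ρ (.lam q M) (.lamClo γ' ρ q M)
  | cpair : ∀ {γ γ' : List Q} {ρ : List (CloVal Q)} {M₁ M₂ : Comp Q},
      vle S γ γ' → EvalComp S γ ρ (.cpair M₁ M₂) (.cpairClo γ' ρ M₁ M₂)
  | ret : ∀ {γ γ₁ : List Q} {ρ : List (CloVal Q)} {q : Q} {V : Val Q} {W : CloVal Q},
      EvalVal S γ₁ ρ V W → vle S γ (vscale S q γ₁) →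
      EvalComp S γ ρ (.ret q V) (.ret q W)
  | app : ∀ {γ γ₁ γ₂ γ' : List Q} {ρ ρ' : List (CloVal Q)} {M M' : Comp Q}
      {V : Val Q} {W : CloVal Q} {q : Q} {T : Terminal Q},
      EvalComp S γ₁ ρ M (.lamClo γ' ρ' q M') → EvalVal S γ₂ ρ V W →
      EvalComp S (q :: γ') (W :: ρ') M' T → vle S γ (vadd S γ₁ (vscale S q γ₂)) →
      EvalComp S γ ρ (.app M V) T
  | force : ∀ {γ γ' : List Q} {ρ ρ' : List (CloVal Q)} {V : Val Q} {M : Comp Q} {T : Terminal Q},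
      EvalVal S γ ρ V (.clo γ' ρ' M) → EvalComp S γ' ρ' M T → EvalComp S γ ρ (.force V) T
  | letin : ∀ {γ γ₁ γ₂ : List Q} {ρ : List (CloVal Q)} {q₁ q₂ : Q} {M N : Comp Q}
      {W : CloVal Q} {T : Terminal Q},
      EvalComp S γ₁ ρ M (.ret q₁ W) → EvalComp S (S.mul q₁ q₂ :: γ₂) (W :: ρ) N T →
      vle S γ (vadd S (vscale S q₂ γ₁) γ₂) → EvalComp S γ ρ (.letin q₂ M N) T
  | split : ∀ {γ γ₁ γ₂ : List Q} {ρ : List (CloVal Q)} {q : Q} {V : Val Q}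
      {W₁ W₂ : CloVal Q} {N : Comp Q} {T : Terminal Q},
      EvalVal S γ₁ ρ V (.pair W₁ W₂) → EvalComp S (q :: q :: γ₂) (W₂ :: W₁ :: ρ) N T →
      vle S γ (vadd S (vscale S q γ₁) γ₂) → EvalComp S γ ρ (.split q V N) T
  | fst : ∀ {γ γ' : List Q} {ρ ρ' : List (CloVal Q)} {M M₁ M₂ : Comp Q} {T : Terminal Q},
      EvalComp S γ ρ M (.cpairClo γ' ρ' M₁ M₂) → EvalComp S γ' ρ' M₁ T →
      EvalComp S γ ρ (.fst M) T
  | snd : ∀ {γ γ' : List Q} {ρ ρ' : List (CloVal Q)} {M M₁ M₂ : Comp Q} {T : Terminal Q},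
      EvalComp S γ ρ M (.cpairClo γ' ρ' M₁ M₂) → EvalComp S γ' ρ' M₂ T →
      EvalComp S γ ρ (.snd M) T

mutual
/-- The logical relation on closed values: `W ∈ 𝒲⟦A⟧`. -/
def WRel {Q : Type} (S : CoSig Q) : VTy Q → CloVal Q → Prop
  | .unit, W => W = CloVal.unit
  | .thunk B, W => ∃ (γ : List Q) (ρ : List (CloVal Q)) (M : Comp Q),
      W = CloVal.clo γ ρ M ∧ ∃ (T : Terminal Q), EvalComp S γ ρ M T ∧ TRel S B T
  | .prod A₁ A₂, W => ∃ (W₁ W₂ : CloVal Q), W = CloVal.pair W₁ W₂ ∧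
      WRel S A₁ W₁ ∧ WRel S A₂ W₂

/-- The logical relation on closed terminals: `T ∈ 𝒯⟦B⟧`. -/
def TRel {Q : Type} (S : CoSig Q) : CTy Q → Terminal Q → Prop
  | .F q A, T => ∃ (W : CloVal Q), T = Terminal.ret q W ∧ WRel S A W
  | .arr A q B, T => ∃ (γ : List Q) (ρ : List (CloVal Q)) (M : Comp Q),
      T = Terminal.lamClo γ ρ q M ∧
      ∀ (W : CloVal Q), WRel S A W →
        ∃ (T' : Terminal Q), EvalComp S (q :: γ) (W :: ρ) M T' ∧ TRel S B T'
  | .wth B₁ B₂, T => ∃ (γ : List Q) (ρ : List (CloVal Q)) (M₁ M₂ : Comp Q),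
      T = Terminal.cpairClo γ ρ M₁ M₂ ∧
      (∃ (T' : Terminal Q), EvalComp S γ ρ M₁ T' ∧ TRel S B₁ T') ∧
      (∃ (T' : Terminal Q), EvalComp S γ ρ M₂ T' ∧ TRel S B₂ T')
end

/-- The logical relation on computations with graded environments: `(γ·ρ, M) ∈ ℳ⟦B⟧`. -/
def MRel {Q : Type} (S : CoSig Q) (B : CTy Q) (γ : List Q) (ρ : List (CloVal Q))
    (M : Comp Q) : Prop :=
  ∃ (T : Terminal Q), EvalComp S γ ρ M T ∧ TRel S B T

/-- The logical relation on values with graded environments: `(γ·ρ, V) ∈ 𝒱⟦A⟧`. -/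
def VRel {Q : Type} (S : CoSig Q) (A : VTy Q) (γ : List Q) (ρ : List (CloVal Q))
    (V : Val Q) : Prop :=
  ∃ (W : CloVal Q), EvalVal S γ ρ V W ∧ WRel S A W

/-- Semantic typing of environments: `Γ ⊨ ρ` — the environment maps every
variable in the domain of `Γ` to a closed value of the expected type. -/
def EnvOk {Q : Type} (S : CoSig Q) (Γ : List (VTy Q)) (ρ : List (CloVal Q)) : Prop :=
  Γ.length = ρ.length ∧
  ∀ (x : Nat) (A : VTy Q), Γ[x]? = some A →
    ∃ (W : CloVal Q), ρ[x]? = some W ∧ WRel S A W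

/-- Semantic typing of values: `γ·Γ ⊨ V : A`. -/
def VSem {Q : Type} (S : CoSig Q) (γ : List Q) (Γ : List (VTy Q)) (V : Val Q)
    (A : VTy Q) : Prop :=
  ∀ (ρ : List (CloVal Q)), EnvOk S Γ ρ → VRel S A γ ρ V

/-- Semantic typing of computations: `γ·Γ ⊨ M : B`. -/
def CSem {Q : Type} (S : CoSig Q) (γ : List Q) (Γ : List (VTy Q)) (M : Comp Q)
    (B : CTy Q) : Prop :=
  ∀ (ρ : List (CloVal Q)), EnvOk S Γ ρ → MRel S B γ ρ M

section Application

variable {Q : Type} {S : CoSig Q} {A : VTy Q} {B : CTy Q} {q : Q}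

theorem tRel_arr_iff {T : Terminal Q} :
    TRel S (.arr A q B) T ↔
      ∃ γ ρ M, T = .lamClo γ ρ q M ∧ ∀ W, WRel S A W → MRel S B (q :: γ) (W :: ρ) M := by
  simp only [TRel, MRel]

theorem MRel.app {γ γ₁ γ₂ : List Q} {ρ : List (CloVal Q)} {M : Comp Q} {V : Val Q}
    (hM : MRel S (.arr A q B) γ₁ ρ M) (hV : VRel S A γ₂ ρ V)
    (hγ : vle S γ (vadd S γ₁ (vscale S q γ₂))) :
    MRel S B γ ρ (.app M V) := by
  obtain ⟨F, evalM, hF⟩ := hM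
  obtain ⟨W, evalV, hW⟩ := hV
  obtain ⟨γ', ρ', M', rfl, hbody⟩ := tRel_arr_iff.mp hF
  obtain ⟨T, evalBody, hT⟩ := hbody W hW
  exact ⟨T, .app evalM evalV evalBody hγ, hT⟩

end Application

/-- Semantic typing lemma for application (coeffects): if `γ₁·Γ ⊨ M : A^q → B`
and `γ₂·Γ ⊨ V : A` and `γ ≤co γ₁ + q·γ₂`, then `γ·Γ ⊨ M V : B`. -/
theorem semantic_app {Q : Type} (S : CoSig Q) {γ γ₁ γ₂ : List Q} {Γ : List (VTy Q)}
    {M : Comp Q} {V : Val Q} {A : VTy Q} {q : Q} {B : CTy Q}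
    (hM : CSem S γ₁ Γ M (.arr A q B)) (hV : VSem S γ₂ Γ V A)
    (hγ : vle S γ (vadd S γ₁ (vscale S q γ₂))) :
    CSem S γ Γ (.app M V) B := by
  intro ρ hρ
  exact (hM ρ hρ).app (hV ρ hρ) hγ

end CBPVCo
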